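/- arXiv:2512.12369 — 2 statements merged into one kernel-verified Lean document; each statement's English description precedes it below -/
import Mathlib

section
/- Every centrally symmetric convex body in the plane is a zonoid: the set of symmetric plane convex bodies equals the closed convex hull (with respect to the Hausdorff distance, using Minkowski combinations) of the set of centrally symmetric segments. -/
open Pointwise

/-!
Blaschke's formula `h(t) = ½ ∫₀^π (h'' + h)(s) |sin (t - s)| ds` exhibits the support function `h`
of a symmetric plane convex body as a superposition of the support functions `|sin (t - s)|` of
segments. Discretised at the angles `k π / N`, with `h'' + h` replaced by
`h (k + 1) + h (k - 1) - 2 cos (π / N) h k`, it becomes an exact identity: this difference is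
nonnegative because `h` is sublinear, and `|sin (m π / N)|` is, up to a factor, its Green's
function on `N`-periodic sequences. The identity represents the circumscribed `2N`-gon of the body
with equally spaced normals as a zonotope; it has the support function of the body in `2N`
directions that are dense in the circle as `N → ∞`, so the Hausdorff distance tends to zero. A
linear equivalence carries this from `ℂ` to any normed plane.

Conversely, a closed Hausdorff limit is the intersection of the closed thickenings of its
approximants, and thickening preserves convexity and central symmetry.
-/

open Metric Set
open scoped NNReal Real RealInnerProductSpace

section HausdorffDistance

variable {X Y : Type*}

lemma iInter_cthickening_eq_of_hausdorffEDist_le [PseudoEMetricSpace X] {K : Set X}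
    (hK : IsClosed K) {Z : ℝ → Set X}
    (hZ : ∀ ε > 0, hausdorffEDist K (Z ε) ≤ ENNReal.ofReal ε) :
    ⋂ ε > 0, cthickening ε (Z ε) = K := by
  refine Subset.antisymm (fun x hx => ?_) (subset_iInter₂ fun ε hε x hx => ?_)
  · rw [← hK.closure_eq, closure_eq_iInter_cthickening]
    refine mem_iInter₂.2 fun ε hε => ?_
    have hε2 : 0 < ε / 2 := half_pos hε
    calc infEDist x K
        ≤ infEDist x (Z (ε / 2)) + hausdorffEDist (Z (ε / 2)) K :=
          infEDist_le_infEDist_add_hausdorffEDist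
      _ ≤ ENNReal.ofReal (ε / 2) + ENNReal.ofReal (ε / 2) :=
          add_le_add (mem_iInter₂.1 hx _ hε2) (hausdorffEDist_comm.trans_le (hZ _ hε2))
      _ = ENNReal.ofReal ε := by rw [← ENNReal.ofReal_add hε2.le hε2.le, add_halves]
  · exact (infEDist_le_hausdorffEDist_of_mem hx).trans (hZ ε hε)

lemma infDist_image_le_of_lipschitzWith [PseudoMetricSpace X] [PseudoMetricSpace Y]
    {f : X → Y} {C : ℝ≥0} (hf : LipschitzWith C f) (x : X) (s : Set X) :
    infDist (f x) (f '' s) ≤ C * infDist x s := by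
  rcases s.eq_empty_or_nonempty with rfl | hs
  · simp
  have := hs.to_subtype
  rw [infDist_eq_iInf (s := s), Real.mul_iInf_of_nonneg C.coe_nonneg]
  exact le_ciInf fun y => (infDist_le_dist_of_mem (mem_image_of_mem f y.2)).trans
    (hf.dist_le_mul x y)

lemma hausdorffDist_image_le_of_lipschitzWith [PseudoMetricSpace X] [PseudoMetricSpace Y]
    {f : X → Y} {C : ℝ≥0} (hf : LipschitzWith C f) {s t : Set X} (hst : hausdorffEDist s t ≠ ⊤) :
    hausdorffDist (f '' s) (f '' t) ≤ C * hausdorffDist s t := by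
  refine hausdorffDist_le_of_infDist (mul_nonneg C.coe_nonneg hausdorffDist_nonneg)
    (forall_mem_image.2 fun x hx => ?_) (forall_mem_image.2 fun x hx => ?_)
  · exact (infDist_image_le_of_lipschitzWith hf x t).trans
      (by gcongr; exact infDist_le_hausdorffDist_of_mem hx hst)
  · rw [hausdorffDist_comm]
    exact (infDist_image_le_of_lipschitzWith hf x s).trans
      (by gcongr; exact infDist_le_hausdorffDist_of_mem hx (hausdorffEDist_comm.trans_ne hst))

end HausdorffDistance

section Zonotope

variable {ι V W : Type*} [Fintype ι] [AddCommGroup V] [Module ℝ V] [AddCommGroup W] [Module ℝ W]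

/-- The zonotope generated by the vectors `v i`: the Minkowski sum of the segments
`[-v i, v i]`, so that zonoids are the Hausdorff limits of zonotopes. -/
def zonotope (v : ι → V) : Set V :=
  ∑ i, segment ℝ (-v i) (v i)

lemma image_zonotope (f : V →ₗ[ℝ] W) (v : ι → V) : f '' zonotope v = zonotope (f ∘ v) := by
  simp only [zonotope, image_finsetSum, Function.comp_apply, ← map_neg]
  exact Finset.sum_congr rfl fun i _ => image_segment ℝ f.toAffineMap _ _

lemma segment_neg_eq_image_Icc (x : V) :
    segment ℝ (-x) x = (fun t : ℝ => t • x) '' Icc (-1) 1 := by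
  rw [← segment_eq_Icc (by norm_num : (-1 : ℝ) ≤ 1)]
  simpa using (image_segment ℝ (LinearMap.toSpanSingleton ℝ V x).toAffineMap (-1) 1).symm

lemma zonotope_eq_image_Icc (v : ι → V) :
    zonotope v = Fintype.linearCombination ℝ v '' Icc (-1) 1 := by
  simp_rw [zonotope, segment_neg_eq_image_Icc, ← image_fintype_sum_pi]
  rw [← pi_univ_Icc, ← piMap_image_univ_pi, image_image]
  rfl

lemma nonempty_zonotope (v : ι → V) : (zonotope v).Nonempty := by
  rw [zonotope_eq_image_Icc]
  exact (nonempty_Icc.2 (neg_le_self zero_le_one)).image _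

lemma convex_zonotope (v : ι → V) : Convex ℝ (zonotope v) := by
  rw [zonotope_eq_image_Icc]
  exact (convex_Icc _ _).linear_image _

lemma neg_zonotope (v : ι → V) : -zonotope v = zonotope v := by
  rw [zonotope_eq_image_Icc, ← image_neg, neg_Icc, neg_neg]

lemma isCompact_zonotope [TopologicalSpace V] [ContinuousAdd V] [ContinuousSMul ℝ V]
    (v : ι → V) : IsCompact (zonotope v) := by
  rw [zonotope_eq_image_Icc]
  refine isCompact_Icc.image ?_
  change Continuous fun t : ι → ℝ => ∑ i, t i • v i
  fun_prop

end Zonotope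

section SupportFunction

variable {ι E : Type*} [Fintype ι] [NormedAddCommGroup E] [InnerProductSpace ℝ E]
  {K A B : Set E} {u : E}

/-- The support function `h_K(u) = sup {⟪u, x⟫ | x ∈ K}`; it takes the junk value `0` where this
supremum is not finite. -/
noncomputable def supportFun (K : Set E) (u : E) : ℝ :=
  sSup ((⟪u, ·⟫) '' K)

lemma inner_le_supportFun (hK : IsCompact K) (u : E) {x : E} (hx : x ∈ K) :
    ⟪u, x⟫ ≤ supportFun K u :=
  le_csSup (hK.image (by fun_prop)).bddAbove (mem_image_of_mem _ hx)

lemma supportFun_le (hK : K.Nonempty) {c : ℝ} (h : ∀ x ∈ K, ⟪u, x⟫ ≤ c) : supportFun K u ≤ c :=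
  csSup_le (hK.image _) (forall_mem_image.2 h)

lemma supportFun_add_le (hK : IsCompact K) (hne : K.Nonempty) (u w : E) :
    supportFun K (u + w) ≤ supportFun K u + supportFun K w :=
  supportFun_le hne fun x hx => (inner_add_left u w x).trans_le
    (add_le_add (inner_le_supportFun hK u hx) (inner_le_supportFun hK w hx))

lemma supportFun_smul (K : Set E) {c : ℝ} (hc : 0 ≤ c) (u : E) :
    supportFun K (c • u) = c * supportFun K u := by
  simp only [supportFun, real_inner_smul_left]
  rw [← smul_eq_mul, ← Real.sSup_smul_of_nonneg hc, ← image_smul, image_image]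
  rfl

lemma supportFun_neg (hK : -K = K) (u : E) : supportFun K (-u) = supportFun K u := by
  conv_rhs => rw [supportFun, ← hK, ← image_neg_eq_neg, image_image]
  simp only [supportFun, inner_neg_left, inner_neg_right]

lemma supportFun_le_mul_norm (hne : K.Nonempty) {R : ℝ} (hK : K ⊆ closedBall 0 R) (u : E) :
    supportFun K u ≤ R * ‖u‖ :=
  supportFun_le hne fun x hx => by
    have hxR : ‖x‖ ≤ R := mem_closedBall_zero_iff.1 (hK hx)
    calc ⟪u, x⟫ ≤ ‖u‖ * ‖x‖ := real_inner_le_norm u x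
      _ ≤ ‖u‖ * R := by gcongr
      _ = R * ‖u‖ := mul_comm _ _

lemma abs_supportFun_sub_le (hK : IsCompact K) (hne : K.Nonempty) {R : ℝ}
    (hR : K ⊆ closedBall 0 R) (u w : E) : |supportFun K u - supportFun K w| ≤ R * dist u w := by
  have supportFun_sub_le (u w : E) : supportFun K u - supportFun K w ≤ R * dist u w := by
    have hadd := supportFun_add_le hK hne w (u - w)
    have hnorm := supportFun_le_mul_norm hne hR (u - w)
    rw [add_sub_cancel] at hadd
    rw [dist_eq_norm]
    linarith
  exact abs_sub_le_iff.2 ⟨supportFun_sub_le u w, dist_comm w u ▸ supportFun_sub_le w u⟩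

lemma supportFun_zonotope (v : ι → E) (u : E) : supportFun (zonotope v) u = ∑ i, |⟪u, v i⟫| := by
  have inner_comb (t : ι → ℝ) :
      ⟪u, Fintype.linearCombination ℝ v t⟫ = ∑ i, t i * ⟪u, v i⟫ := by
    simp [Fintype.linearCombination_apply, inner_sum, real_inner_smul_right]
  rw [supportFun, zonotope_eq_image_Icc, image_image]
  simp only [inner_comb]
  refine IsGreatest.csSup_eq ⟨⟨fun i => SignType.sign ⟪u, v i⟫, ?_, ?_⟩, forall_mem_image.2 ?_⟩
  · simp only [← pi_univ_Icc, mem_univ_pi]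
    intro i
    cases SignType.sign ⟪u, v i⟫ <;> simp
  · simp only [sign_mul_self]
  · intro t ht
    refine Finset.sum_le_sum fun i _ => ?_
    calc t i * ⟪u, v i⟫ ≤ |t i| * |⟪u, v i⟫| := abs_mul (t i) _ ▸ le_abs_self _
      _ ≤ |⟪u, v i⟫| := mul_le_of_le_one_left (abs_nonneg _) (abs_le.2 ⟨ht.1 i, ht.2 i⟩)

lemma exists_dist_le_of_supportFun_le (hA : IsCompact A) (hB : IsCompact B) (hBne : B.Nonempty)
    (hBconv : Convex ℝ B) {ε : ℝ} (hε : 0 ≤ ε)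
    (h : ∀ u ∈ sphere (0 : E) 1, supportFun A u ≤ supportFun B u + ε) {x : E} (hx : x ∈ A) :
    ∃ y ∈ B, dist x y ≤ ε := by
  obtain ⟨p, hp, hmin⟩ := exists_norm_eq_iInf_of_complete_convex hBne hB.isComplete hBconv x
  have hobtuse : ∀ y ∈ B, ⟪x - p, y - p⟫ ≤ 0 :=
    (norm_eq_iInf_iff_real_inner_le_zero hBconv hp).1 hmin
  refine ⟨p, hp, ?_⟩
  rcases eq_or_ne x p with rfl | hxp
  · simpa using hε
  have hpos : 0 < ‖x - p‖ := norm_pos_iff.2 (sub_ne_zero.2 hxp)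
  set u := ‖x - p‖⁻¹ • (x - p) with hu
  have hunit : u ∈ sphere (0 : E) 1 := by
    simpa [hu, norm_smul] using inv_mul_cancel₀ hpos.ne'
  have hBp : supportFun B u ≤ ⟪u, p⟫ := supportFun_le hBne fun y hy => by
    rw [← sub_nonpos, ← inner_sub_right, hu, real_inner_smul_left]
    exact mul_nonpos_of_nonneg_of_nonpos (by positivity) (hobtuse y hy)
  calc dist x p = ⟪u, x - p⟫ := by
        rw [dist_eq_norm, hu, real_inner_smul_left, real_inner_self_eq_norm_mul_norm,
          inv_mul_cancel_left₀ hpos.ne']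
    _ = ⟪u, x⟫ - ⟪u, p⟫ := inner_sub_right _ _ _
    _ ≤ ε := by linarith [inner_le_supportFun hA u hx, h u hunit]

lemma subset_closedBall_of_supportFun_le (hA : A.Nonempty) {R : ℝ} (hAR : A ⊆ closedBall 0 R)
    (hB : IsCompact B) {D : Set E} {δ : ℝ≥0} (hD : IsCover δ (sphere (0 : E) 1) D)
    (hδ : δ ≤ 1 / 2) (h : ∀ w ∈ D, supportFun B w ≤ supportFun A w) :
    B ⊆ closedBall 0 (3 * R) := by
  intro x hx
  have hR : 0 ≤ R := nonempty_closedBall.1 (hA.mono hAR)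
  rw [mem_closedBall_zero_iff]
  rcases eq_or_ne x 0 with rfl | hx0
  · simpa using hR
  have hpos : 0 < ‖x‖ := norm_pos_iff.2 hx0
  have hunit : ‖x‖⁻¹ • x ∈ sphere (0 : E) 1 := by
    simpa [norm_smul] using inv_mul_cancel₀ hpos.ne'
  obtain ⟨w, hwD, hw⟩ := hD hunit
  replace hw : ‖‖x‖⁻¹ • x - w‖ ≤ 1 / 2 := by
    rw [← dist_eq_norm]
    exact (edist_le_coe.1 hw).trans hδ
  have hwnorm : ‖w‖ ≤ 3 / 2 := by
    have := norm_sub_norm_le w (‖x‖⁻¹ • x)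
    rw [norm_sub_rev, mem_sphere_zero_iff_norm.1 hunit] at this
    linarith
  have hwx : ⟪w, x⟫ ≤ R * (3 / 2) :=
    calc ⟪w, x⟫ ≤ supportFun A w := (inner_le_supportFun hB w hx).trans (h w hwD)
      _ ≤ R * ‖w‖ := supportFun_le_mul_norm hA hAR w
      _ ≤ R * (3 / 2) := by gcongr
  have hux : ⟪‖x‖⁻¹ • x - w, x⟫ ≤ 1 / 2 * ‖x‖ := (real_inner_le_norm _ _).trans (by gcongr)
  have hnorm : ‖x‖ = ⟪w, x⟫ + ⟪‖x‖⁻¹ • x - w, x⟫ := by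
    rw [← inner_add_left, add_sub_cancel, real_inner_smul_left, real_inner_self_eq_norm_mul_norm,
      inv_mul_cancel_left₀ hpos.ne']
  linarith

theorem hausdorffDist_le_of_supportFun_eq_on_cover (hA : IsCompact A) (hAne : A.Nonempty)
    (hAconv : Convex ℝ A) {R : ℝ} (hAR : A ⊆ closedBall 0 R) (hB : IsCompact B)
    (hBne : B.Nonempty) (hBconv : Convex ℝ B) {D : Set E} {δ : ℝ≥0}
    (hD : IsCover δ (sphere (0 : E) 1) D) (hδ : δ ≤ 1 / 2)
    (h : ∀ w ∈ D, supportFun A w = supportFun B w) : hausdorffDist A B ≤ 4 * R * δ := by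
  have hR : 0 ≤ R := nonempty_closedBall.1 (hAne.mono hAR)
  have hBR : B ⊆ closedBall 0 (3 * R) :=
    subset_closedBall_of_supportFun_le hAne hAR hB hD hδ fun w hw => (h w hw).ge
  have hclose : ∀ u ∈ sphere (0 : E) 1, |supportFun A u - supportFun B u| ≤ 4 * R * δ := by
    intro u hu
    obtain ⟨w, hwD, hw⟩ := hD hu
    have hA_close := (abs_supportFun_sub_le hA hAne hAR u w).trans
      (mul_le_mul_of_nonneg_left (edist_le_coe.1 hw) hR)
    have hB_close := (abs_supportFun_sub_le hB hBne hBR w u).trans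
      (mul_le_mul_of_nonneg_left ((dist_comm w u).trans_le (edist_le_coe.1 hw)) (by positivity))
    calc |supportFun A u - supportFun B u|
        ≤ |supportFun A u - supportFun A w| + |supportFun B w - supportFun B u| := by
          rw [← h w hwD]
          exact abs_sub_le _ _ _
      _ ≤ R * δ + 3 * R * δ := add_le_add hA_close hB_close
      _ = 4 * R * δ := by ring
  refine hausdorffDist_le_of_mem_dist (by positivity)
    (fun x hx => exists_dist_le_of_supportFun_le hA hB hBne hBconv (by positivity) ?_ hx)
    (fun y hy => exists_dist_le_of_supportFun_le hB hA hAne hAconv (by positivity) ?_ hy)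
  · intro u hu
    linarith [(abs_le.1 (hclose u hu)).2]
  · intro u hu
    linarith [(abs_le.1 (hclose u hu)).1]

end SupportFunction

section DiscreteHelmholtz

lemma sum_range_add_one_of_periodic {M : Type*} [AddCommMonoid M] {f : ℤ → M} {N : ℕ}
    (hf : Function.Periodic f N) :
    ∑ j ∈ Finset.range N, f (j + 1) = ∑ j ∈ Finset.range N, f j := by
  cases N with
  | zero => rfl
  | succ n =>
    rw [Finset.sum_range_succ, Finset.sum_range_succ', ← Nat.cast_succ, hf.eq]
    simp only [Nat.cast_add, Nat.cast_one, Nat.cast_zero]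

variable {R : Type*} [CommRing R]

/-- The discrete Helmholtz operator `f ↦ f(k+1) + f(k-1) - c f(k)` on sequences. For
`c = 2 cos δ` it annihilates `cos (k δ)` and `sin (k δ)`, as `f ↦ f'' + f` does with `cos`
and `sin`. -/
def helmholtz (c : R) (f : ℤ → R) (k : ℤ) : R :=
  f (k + 1) + f (k - 1) - c * f k

lemma periodic_helmholtz {f : ℤ → R} {p : ℤ} (hf : Function.Periodic f p) (c : R) :
    Function.Periodic (helmholtz c f) p := fun k => by
  simp only [helmholtz, add_right_comm k p 1, add_sub_right_comm k p 1, hf _]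

lemma sum_helmholtz_mul {f g : ℤ → R} {N : ℕ} (hf : Function.Periodic f N)
    (hg : Function.Periodic g N) (c : R) (k : ℤ) :
    ∑ j ∈ Finset.range N, helmholtz c f j * g (k - j) =
      ∑ j ∈ Finset.range N, f j * helmholtz c g (k - j) := by
  have shift_left : ∑ j ∈ Finset.range N, f (j + 1) * g (k - j) =
      ∑ j ∈ Finset.range N, f j * g (k - j + 1) := by
    have hper : Function.Periodic (fun j => f j * g (k - j + 1)) N := fun j => by
      simp only [hf j, sub_add_eq_sub_sub, sub_add_eq_add_sub _ (N : ℤ), hg.sub_eq]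
    simpa only [sub_add_eq_sub_sub, sub_add_cancel] using sum_range_add_one_of_periodic hper
  have shift_right : ∑ j ∈ Finset.range N, f (j - 1) * g (k - j) =
      ∑ j ∈ Finset.range N, f j * g (k - j - 1) := by
    have hper : Function.Periodic (fun j => f (j - 1) * g (k - j)) N := fun j => by
      simp only [add_sub_right_comm j, hf _, sub_add_eq_sub_sub, hg.sub_eq]
    simpa only [sub_add_eq_sub_sub, add_sub_cancel_right] using
      (sum_range_add_one_of_periodic hper).symm
  simp only [helmholtz, sub_mul, add_mul, mul_sub, mul_add, Finset.sum_sub_distrib,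
    Finset.sum_add_distrib, shift_left, shift_right, mul_assoc, mul_left_comm c]

lemma periodic_emod {α : Type*} {f : ℤ → α} {p : ℤ} (hf : Function.Periodic f p) (k : ℤ) :
    f (k % p) = f k := by
  rw [Int.emod_def, mul_comm, ← smul_eq_mul, hf.sub_zsmul_eq]

lemma sum_range_ite_dvd_sub {M : Type*} [AddCommMonoid M] {f : ℤ → M} {N : ℕ} (hN : N ≠ 0)
    (hf : Function.Periodic f N) (k : ℤ) :
    ∑ j ∈ Finset.range N, (if (N : ℤ) ∣ k - j then f j else 0) = f k := by
  have hr0 : 0 ≤ k % N := Int.emod_nonneg k (mod_cast hN)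
  have hrN : k % N < N := Int.emod_lt_of_pos k (mod_cast Nat.pos_of_ne_zero hN)
  obtain ⟨r, hr⟩ := Int.eq_ofNat_of_zero_le hr0
  have dvd_iff : ∀ j ∈ Finset.range N, (N : ℤ) ∣ k - j ↔ j = r := fun j hj => by
    have hjN : (j : ℤ) % N = j := Int.emod_eq_of_lt (by positivity) (mod_cast Finset.mem_range.1 hj)
    rw [← Int.modEq_iff_dvd, Int.ModEq, hjN, hr, Int.ofNat_inj]
  have hrmem : r ∈ Finset.range N := Finset.mem_range.2 (by omega)
  calc ∑ j ∈ Finset.range N, (if (N : ℤ) ∣ k - j then f j else 0)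
      = ∑ j ∈ Finset.range N, if j = r then f j else 0 :=
        Finset.sum_congr rfl fun j hj => by simp only [dvd_iff j hj]
    _ = f (k % N) := by rw [Finset.sum_ite_eq', if_pos hrmem, hr]
    _ = f k := periodic_emod hf k

lemma periodic_abs_sin_int_mul {N : ℕ} (hN : N ≠ 0) :
    Function.Periodic (fun m : ℤ => |Real.sin (m * (π / N))|) N := fun m => by
  have h : ((m + N : ℤ) : ℝ) * (π / N) = m * (π / N) + π := by
    push_cast
    field_simp
  simp only [h, Real.sin_add_pi, abs_neg]

lemma helmholtz_abs_sin {N : ℕ} (hN : N ≠ 0) (m : ℤ) :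
    helmholtz (2 * Real.cos (π / N)) (fun m : ℤ => |Real.sin (m * (π / N))|) m =
      if (N : ℤ) ∣ m then 2 * Real.sin (π / N) else 0 := by
  rw [← periodic_emod (periodic_helmholtz (periodic_abs_sin_int_mul hN) _) m]
  simp only [Int.dvd_iff_emod_eq_zero]
  have hr0 : 0 ≤ m % N := Int.emod_nonneg m (mod_cast hN)
  have hrN : m % N < N := Int.emod_lt_of_pos m (mod_cast Nat.pos_of_ne_zero hN)
  generalize m % (N : ℤ) = r at hr0 hrN
  set δ := π / N with hδ
  have hNδ : N * δ = π := by rw [hδ]; field_simp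
  have hδ0 : 0 < δ := by positivity
  have abs_sin_eq {s : ℤ} (hs0 : 0 ≤ s) (hsN : s ≤ N) : |Real.sin (s * δ)| = Real.sin (s * δ) := by
    have hs0' : (0 : ℝ) ≤ s := mod_cast hs0
    have hsN' : (s : ℝ) ≤ N := mod_cast hsN
    exact abs_of_nonneg (Real.sin_nonneg_of_nonneg_of_le_pi (mul_nonneg hs0' hδ0.le)
      (hNδ ▸ mul_le_mul_of_nonneg_right hsN' hδ0.le))
  rw [helmholtz, abs_sin_eq (by omega) (by omega), abs_sin_eq hr0 hrN.le]
  split_ifs with h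
  · subst h
    have habs : |Real.sin ((0 - 1 : ℤ) * δ)| = Real.sin ((0 + 1 : ℤ) * δ) := by
      rw [zero_sub, zero_add, Int.cast_neg, neg_mul, Real.sin_neg, abs_neg,
        abs_sin_eq (by omega) (by omega)]
    rw [habs]
    simp only [zero_add, Int.cast_one, one_mul, Int.cast_zero, zero_mul, Real.sin_zero]
    ring
  · rw [abs_sin_eq (by omega) (by omega)]
    push_cast
    rw [add_mul, sub_mul, one_mul, Real.sin_add, Real.sin_sub]
    ring

lemma sum_helmholtz_mul_abs_sin {f : ℤ → ℝ} {N : ℕ} (hN : N ≠ 0) (hf : Function.Periodic f N)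
    (k : ℤ) :
    ∑ j ∈ Finset.range N, helmholtz (2 * Real.cos (π / N)) f j *
        |Real.sin ((k - j : ℤ) * (π / N))| = 2 * Real.sin (π / N) * f k := by
  rw [sum_helmholtz_mul (g := fun m : ℤ => |Real.sin (m * (π / N))|) hf
    (periodic_abs_sin_int_mul hN)]
  simp only [helmholtz_abs_sin hN]
  rw [← sum_range_ite_dvd_sub hN hf k, Finset.mul_sum]
  exact Finset.sum_congr rfl fun j _ => by split_ifs <;> ring

end DiscreteHelmholtz

section Plane

/-- The unit vector of `ℂ` with argument `k π / N`. -/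
noncomputable def direction (N : ℕ) (k : ℤ) : ℂ :=
  Complex.exp ((k * (π / N) : ℝ) * Complex.I)

lemma direction_add_self {N : ℕ} (hN : N ≠ 0) (k : ℤ) : direction N (k + N) = -direction N k := by
  rw [direction, direction, ← Complex.exp_add_pi_mul_I]
  congr 1
  push_cast
  field_simp

lemma direction_add_one_add_direction_sub_one (N : ℕ) (k : ℤ) :
    direction N (k + 1) + direction N (k - 1) = (2 * Real.cos (π / N)) • direction N k := by
  have hcos : ((2 * Real.cos (π / N) : ℝ) : ℂ) =
      Complex.exp (π / N * Complex.I) + Complex.exp (-(π / N) * Complex.I) := by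
    push_cast
    exact Complex.two_cos _
  rw [Complex.real_smul, hcos, add_mul, direction, direction, direction, ← Complex.exp_add,
    ← Complex.exp_add]
  congr 2 <;> push_cast <;> ring

lemma inner_direction_I_mul_direction (N : ℕ) (k j : ℤ) :
    ⟪direction N k, Complex.I * direction N j⟫ = Real.sin ((k - j : ℤ) * (π / N)) := by
  simp only [Complex.inner, direction, Complex.mul_re, Complex.mul_im, Complex.conj_re,
    Complex.conj_im, Complex.I_re, Complex.I_im, Complex.exp_ofReal_mul_I_re,
    Complex.exp_ofReal_mul_I_im, Int.cast_sub, sub_mul, Real.sin_sub]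
  ring

lemma dist_exp_ofReal_mul_I_le (x y : ℝ) :
    dist (Complex.exp (x * Complex.I)) (Complex.exp (y * Complex.I)) ≤ |x - y| := by
  have hfactor : Complex.exp (x * Complex.I) - Complex.exp (y * Complex.I) =
      (Complex.exp (Complex.I * (x - y : ℝ)) - 1) * Complex.exp (y * Complex.I) := by
    rw [sub_mul, one_mul, ← Complex.exp_add]
    congr 2
    push_cast
    ring
  rw [dist_eq_norm, hfactor, norm_mul, Complex.norm_exp_ofReal_mul_I, mul_one]
  exact Real.norm_exp_I_mul_ofReal_sub_one_le

lemma isCover_direction {N : ℕ} (hN : N ≠ 0) :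
    IsCover (π / N).toNNReal (sphere (0 : ℂ) 1) (range (direction N)) := by
  intro z hz
  set δ := π / N
  have hδ0 : 0 < δ := by positivity
  have hz : Complex.exp (z.arg * Complex.I) = z := by
    simpa [mem_sphere_zero_iff_norm.1 hz] using Complex.norm_mul_exp_arg_mul_I z
  refine ⟨_, mem_range_self ⌊z.arg / δ⌋, ?_⟩
  have hfloor : |z.arg - ⌊z.arg / δ⌋ * δ| ≤ δ := by
    rw [abs_of_nonneg (Int.sub_floor_div_mul_nonneg _ hδ0)]
    exact (Int.sub_floor_div_mul_lt _ hδ0).le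
  have hdist := (dist_exp_ofReal_mul_I_le z.arg (⌊z.arg / δ⌋ * δ)).trans hfloor
  rw [hz] at hdist
  exact edist_le_coe.2 (hdist.trans (Real.le_coe_toNNReal δ))

/-- The half-edge with outer normal `direction N j` of the `2N`-gon circumscribed about the
symmetric body `K` whose outer normals are the vectors `direction N k`. A polygon whose
consecutive outer normals make the angle `δ` has edges of length
`(h (k + 1) + h (k - 1) - 2 cos δ h k) / sin δ`, where `h` is its support function. -/
noncomputable def circumscribedEdge (K : Set ℂ) (N : ℕ) (j : Fin N) : ℂ :=
  (helmholtz (2 * Real.cos (π / N)) (supportFun K ∘ direction N) j /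
    (2 * Real.sin (π / N))) • (Complex.I * direction N j)

variable {K : Set ℂ} {N : ℕ}

lemma cos_pi_div_natCast_nonneg (hN : 2 ≤ N) : 0 ≤ Real.cos (π / N) :=
  Real.cos_nonneg_of_neg_pi_div_two_le_of_le
    ((neg_nonpos.2 Real.pi_div_two_pos.le).trans (by positivity))
    (div_le_div_of_nonneg_left Real.pi_pos.le two_pos (mod_cast hN))

lemma sin_pi_div_natCast_pos (hN : 2 ≤ N) : 0 < Real.sin (π / N) :=
  Real.sin_pos_of_pos_of_lt_pi (div_pos Real.pi_pos (by positivity))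
    (div_lt_self Real.pi_pos (mod_cast hN))

lemma helmholtz_supportFun_direction_nonneg (hK : IsCompact K) (hne : K.Nonempty) (hN : 2 ≤ N)
    (k : ℤ) :
    0 ≤ helmholtz (2 * Real.cos (π / N)) (supportFun K ∘ direction N) k := by
  have hcos := cos_pi_div_natCast_nonneg hN
  simp only [helmholtz, Function.comp_apply]
  rw [sub_nonneg, ← supportFun_smul K (by positivity),
    ← direction_add_one_add_direction_sub_one]
  exact supportFun_add_le hK hne _ _

lemma periodic_supportFun_direction (hK : -K = K) (hN : N ≠ 0) :
    Function.Periodic (supportFun K ∘ direction N) N := fun k => by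
  simp only [Function.comp_apply, direction_add_self hN, supportFun_neg hK]

lemma supportFun_zonotope_circumscribedEdge (hK : IsCompact K) (hne : K.Nonempty) (hsymm : -K = K)
    (hN : 2 ≤ N) (k : ℤ) :
    supportFun (zonotope (circumscribedEdge K N)) (direction N k) =
      supportFun K (direction N k) := by
  have hsin := sin_pi_div_natCast_pos hN
  have abs_inner_edge (j : Fin N) : |⟪direction N k, circumscribedEdge K N j⟫| =
      helmholtz (2 * Real.cos (π / N)) (supportFun K ∘ direction N) j *
        |Real.sin ((k - (j : ℕ) : ℤ) * (π / N))| / (2 * Real.sin (π / N)) := by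
    rw [circumscribedEdge, real_inner_smul_right, inner_direction_I_mul_direction, abs_mul,
      abs_of_nonneg (div_nonneg (helmholtz_supportFun_direction_nonneg hK hne hN j)
        (by positivity)), div_mul_eq_mul_div]
  simp only [supportFun_zonotope, abs_inner_edge, ← Finset.sum_div]
  rw [Fin.sum_univ_eq_sum_range (fun j : ℕ => helmholtz (2 * Real.cos (π / N))
    (supportFun K ∘ direction N) j * |Real.sin ((k - j : ℤ) * (π / N))|) N,
    sum_helmholtz_mul_abs_sin (by omega) (periodic_supportFun_direction hsymm (by omega)),
    mul_div_cancel_left₀ _ (by positivity), Function.comp_apply]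

theorem exists_hausdorffDist_zonotope_lt_of_complex (hne : K.Nonempty) (hK : IsCompact K)
    (hconv : Convex ℝ K) (hsymm : -K = K) {ε : ℝ} (hε : 0 < ε) :
    ∃ (n : ℕ) (v : Fin n → ℂ), hausdorffDist K (zonotope v) < ε := by
  obtain ⟨R, hR⟩ := hK.isBounded.subset_closedBall 0
  have htendsto : Filter.Tendsto (fun N : ℕ => π / N) Filter.atTop (nhds 0) :=
    tendsto_const_div_atTop_nhds_zero_nat π
  have hsmall := (htendsto.const_mul (4 * R)).eventually_lt_const (by simpa using hε)
  have hhalf := htendsto.eventually_le_const (by norm_num : (0 : ℝ) < 1 / 2)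
  obtain ⟨N, hNε, hNhalf, hN⟩ := (hsmall.and (hhalf.and (Filter.eventually_ge_atTop 2))).exists
  refine ⟨N, circumscribedEdge K N, lt_of_le_of_lt ?_ hNε⟩
  have hcover := isCover_direction (by omega : N ≠ 0)
  have hδ : (π / N).toNNReal ≤ 1 / 2 := Real.toNNReal_le_iff_le_coe.2 (by simpa using hNhalf)
  have hdist := hausdorffDist_le_of_supportFun_eq_on_cover hK hne hconv hR (isCompact_zonotope _)
    (nonempty_zonotope _) (convex_zonotope _) hcover hδ
    (forall_mem_range.2 fun k => (supportFun_zonotope_circumscribedEdge hK hne hsymm hN k).symm)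
  rwa [Real.coe_toNNReal _ (by positivity)] at hdist

end Plane

section Zonoid

variable {V : Type*} [NormedAddCommGroup V] [NormedSpace ℝ V] {K : Set V}

theorem exists_hausdorffDist_zonotope_lt (hV : Module.finrank ℝ V = 2) (hne : K.Nonempty)
    (hK : IsCompact K) (hconv : Convex ℝ K) (hsymm : -K = K) {ε : ℝ} (hε : 0 < ε) :
    ∃ (n : ℕ) (v : Fin n → V), hausdorffDist K (zonotope v) < ε := by
  have : FiniteDimensional ℝ V := Module.finite_of_finrank_eq_succ hV
  let e : V ≃L[ℝ] ℂ := .ofFinrankEq (hV.trans Complex.finrank_real_complex.symm)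
  have hC : 0 < ‖(e.symm : ℂ →L[ℝ] V)‖₊ + 1 := by positivity
  have hlip : LipschitzWith (‖(e.symm : ℂ →L[ℝ] V)‖₊ + 1) e.symm :=
    e.symm.lipschitz.weaken (le_add_of_nonneg_right zero_le_one)
  generalize ‖(e.symm : ℂ →L[ℝ] V)‖₊ + 1 = C at hC hlip
  have hsymm_image : -(e '' K) = e '' K := by rw [← image_neg, hsymm]
  obtain ⟨n, v, hv⟩ := exists_hausdorffDist_zonotope_lt_of_complex (hne.image e)
    (hK.image e.continuous) (hconv.linear_image e.toLinearMap) hsymm_image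
    (div_pos hε (NNReal.coe_pos.2 hC))
  refine ⟨n, e.symm ∘ v, ?_⟩
  have hfin : hausdorffEDist (e '' K) (zonotope v) ≠ ⊤ :=
    hausdorffEDist_ne_top_of_nonempty_of_bounded (hne.image e) (nonempty_zonotope v)
      (hK.image e.continuous).isBounded (isCompact_zonotope v).isBounded
  calc hausdorffDist K (zonotope (e.symm ∘ v))
      = hausdorffDist (e.symm '' (e '' K)) (e.symm '' zonotope v) := by
        rw [e.symm_image_image]
        congr 1
        exact (image_zonotope e.symm.toLinearMap v).symm
    _ ≤ C * hausdorffDist (e '' K) (zonotope v) := hausdorffDist_image_le_of_lipschitzWith hlip hfin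
    _ < ε := (lt_div_iff₀' (NNReal.coe_pos.2 hC)).1 hv

lemma convex_and_neg_eq_of_forall_hausdorffDist_zonotope_lt (hne : K.Nonempty) (hK : IsClosed K)
    (hbdd : Bornology.IsBounded K)
    (h : ∀ ε > (0 : ℝ), ∃ (n : ℕ) (v : Fin n → V), hausdorffDist K (zonotope v) < ε) :
    Convex ℝ K ∧ -K = K := by
  choose! n v hv using h
  have hZ : ∀ ε > 0, hausdorffEDist K (zonotope (v ε)) ≤ ENNReal.ofReal ε := fun ε hε => by
    have hfin := hausdorffEDist_ne_top_of_nonempty_of_bounded hne (nonempty_zonotope (v ε))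
      hbdd (isCompact_zonotope _).isBounded
    rw [← ENNReal.ofReal_toReal hfin]
    exact ENNReal.ofReal_le_ofReal (hv ε hε).le
  rw [← iInter_cthickening_eq_of_hausdorffEDist_le hK hZ]
  refine ⟨convex_iInter₂ fun ε _ => (convex_zonotope _).cthickening ε, ?_⟩
  simp only [Set.iInter_neg, neg_cthickening, neg_zonotope]

end Zonoid

theorem symmetric_plane_convex_bodies_are_zonoids_general {V : Type*} [NormedAddCommGroup V]
    [NormedSpace ℝ V] (hV : Module.finrank ℝ V = 2) :
    (∀ K : Set V, K.Nonempty → IsCompact K → Convex ℝ K → -K = K →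
      ∀ ε > (0 : ℝ), ∃ (n : ℕ) (v : Fin n → V), hausdorffDist K (zonotope v) < ε) ∧
    (∀ K : Set V, K.Nonempty → IsCompact K →
      (∀ ε > (0 : ℝ), ∃ (n : ℕ) (v : Fin n → V), hausdorffDist K (zonotope v) < ε) →
      Convex ℝ K ∧ -K = K) :=
  ⟨fun _ hne hK hconv hsymm _ hε => exists_hausdorffDist_zonotope_lt hV hne hK hconv hsymm hε,
    fun _ hne hK h =>
      convex_and_neg_eq_of_forall_hausdorffDist_zonotope_lt hne hK.isClosed hK.isBounded h⟩

/-- Every centrally symmetric plane convex body is a zonoid: it is, in the Hausdorff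
distance, a limit of finite Minkowski sums of centrally symmetric segments; conversely any
such Hausdorff limit which is a nonempty compact set is a symmetric convex body. -/
theorem symmetric_plane_convex_bodies_are_zonoids :
    (∀ K : Set (EuclideanSpace ℝ (Fin 2)), K.Nonempty → IsCompact K → Convex ℝ K →
      -K = K → ∀ ε > (0:ℝ), ∃ (n : ℕ) (v : Fin n → EuclideanSpace ℝ (Fin 2)),
        Metric.hausdorffDist K (∑ i : Fin n, segment ℝ (-(v i)) (v i)) < ε) ∧
    (∀ K : Set (EuclideanSpace ℝ (Fin 2)), K.Nonempty → IsCompact K →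
      (∀ ε > (0:ℝ), ∃ (n : ℕ) (v : Fin n → EuclideanSpace ℝ (Fin 2)),
        Metric.hausdorffDist K (∑ i : Fin n, segment ℝ (-(v i)) (v i)) < ε) →
      Convex ℝ K ∧ -K = K) :=
  symmetric_plane_convex_bodies_are_zonoids_general finrank_euclideanSpace_fin
end

section
/- Let E₁, ..., Eₙ (n ≥ 2) be pairwise non-homothetic origin-symmetric ellipses in ℝ² and c₁, ..., cₙ > 0. Then the Minkowski sum c₁E₁ + ... + cₙEₙ is not an ellipse. -/
open Pointwise

/-- An origin-symmetric ellipse (possibly a disc) in the plane: the image of the closed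
unit disc under an invertible linear map. -/
def IsSymmEllipse (E : Set (EuclideanSpace ℝ (Fin 2))) : Prop :=
  ∃ A : EuclideanSpace ℝ (Fin 2) ≃ₗ[ℝ] EuclideanSpace ℝ (Fin 2),
    E = A '' Metric.closedBall 0 1

open Filter Topology ComplexConjugate UpperHalfPlane

/-!
The support function of an ellipse has the form `w ↦ a * ‖w 0 - w 1 * τ‖` with `a > 0` and `τ` in
the upper half plane, and `τ` determines the ellipse up to homothety. Support functions turn
Minkowski sums into sums, so it suffices that the functions `t ↦ ‖t - τ‖` on the real line are
linearly independent. Such a function continues analytically as the square root of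
`(z - τ) * (z - conj τ)`, which branches at `τ`. In a linear relation, let `τ` have the smallest
imaginary part; all the other terms continue analytically along the vertical segment from the real
line up to and including `τ`, whereas the term of `τ` does not, because the square of a continuation
would have a simple zero at `τ`.
-/

section SupportFunction

variable {V : Type*} [NormedAddCommGroup V] [InnerProductSpace ℝ V]

/-- `h` is the support function `w ↦ sup {⟪v, w⟫ | v ∈ K}` of `K`, through which Minkowski sums
become sums of functions. It is encoded as a relation rather than by `sSup`, so that unbounded sets
and the empty set have no support function instead of a junk value. -/
def HasSupportFn (K : Set V) (h : V → ℝ) : Prop :=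
  ∀ w, IsLUB ((inner ℝ · w) '' K) (h w)

namespace HasSupportFn

variable {K L : Set V} {g h : V → ℝ}

protected lemma zero : HasSupportFn (0 : Set V) 0 := fun w ↦ by
  simp [← Set.singleton_zero]

protected lemma add (hK : HasSupportFn K g) (hL : HasSupportFn L h) :
    HasSupportFn (K + L) (g + h) := fun w ↦ by
  rw [← Set.image2_add, Set.image_image2_distrib fun u v ↦ inner_add_left u v w, Set.image2_add]
  exact (hK w).add (hL w)

protected lemma smul (hK : HasSupportFn K h) {c : ℝ} (hc : 0 ≤ c) : HasSupportFn (c • K) (c • h) :=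
  fun w ↦ by simpa [← Set.image_smul, Set.image_image, inner_smul_left] using (hK w).mul_left hc

protected lemma sum {ι : Type*} {s : Finset ι} {K : ι → Set V} {h : ι → V → ℝ}
    (hK : ∀ i ∈ s, HasSupportFn (K i) (h i)) : HasSupportFn (∑ i ∈ s, K i) (∑ i ∈ s, h i) := by
  induction s using Finset.cons_induction with
  | empty => exact HasSupportFn.zero
  | cons i s his ih =>
    rw [Finset.forall_mem_cons] at hK
    rw [Finset.sum_cons, Finset.sum_cons]
    exact hK.1.add (ih hK.2)

lemma unique (hg : HasSupportFn K g) (hh : HasSupportFn K h) : g = h :=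
  funext fun w ↦ (hg w).unique (hh w)

lemma subset_of_le [CompleteSpace V] (hK : HasSupportFn K g) (hL : HasSupportFn L h)
    (hLconv : Convex ℝ L) (hLclosed : IsClosed L) (hgh : g ≤ h) : K ⊆ L := by
  intro v hv
  by_contra hvL
  obtain ⟨f, u, hfL, hfv⟩ := geometric_hahn_banach_closed_point hLconv hLclosed hvL
  obtain ⟨w, rfl⟩ := (InnerProductSpace.toDual ℝ V).surjective f
  simp only [InnerProductSpace.toDual_apply_apply, ← real_inner_comm w] at hfL hfv
  refine hfv.not_ge ?_
  calc
    inner ℝ v w ≤ g w := (hK w).1 ⟨v, hv, rfl⟩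
    _ ≤ h w := hgh w
    _ ≤ u := (hL w).2 (Set.forall_mem_image.2 fun a ha ↦ (hfL a ha).le)

lemma eq_of_convex_of_isClosed [CompleteSpace V] (hK : HasSupportFn K h) (hL : HasSupportFn L h)
    (hKconv : Convex ℝ K) (hKclosed : IsClosed K) (hLconv : Convex ℝ L) (hLclosed : IsClosed L) :
    K = L :=
  (hK.subset_of_le hL hLconv hLclosed le_rfl).antisymm
    (hL.subset_of_le hK hKconv hKclosed le_rfl)

lemma eq_div_smul [CompleteSpace V] {a b : ℝ} (ha : 0 < a) (hb : 0 < b)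
    (hK : HasSupportFn K (a • h)) (hL : HasSupportFn L (b • h))
    (hKconv : Convex ℝ K) (hKclosed : IsClosed K) (hLconv : Convex ℝ L) (hLclosed : IsClosed L) :
    K = (a / b) • L := by
  have hL' : HasSupportFn ((a / b) • L) (a • h) := by
    simpa [smul_smul, hb.ne'] using hL.smul (div_pos ha hb).le
  exact hK.eq_of_convex_of_isClosed hL' hKconv hKclosed (hLconv.smul _)
    (hLclosed.smul_of_ne_zero (div_pos ha hb).ne')

lemma image_closedBall {W : Type*} [NormedAddCommGroup W] [InnerProductSpace ℝ W]
    [CompleteSpace V] [CompleteSpace W] (A : V →L[ℝ] W) :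
    HasSupportFn (A '' Metric.closedBall 0 1) fun w ↦ ‖ContinuousLinearMap.adjoint A w‖ := by
  intro w
  rw [Set.image_image]
  simp only [← ContinuousLinearMap.adjoint_inner_right]
  generalize ContinuousLinearMap.adjoint A w = u
  refine IsGreatest.isLUB ⟨⟨‖u‖⁻¹ • u, ?_, ?_⟩, Set.forall_mem_image.2 fun v hv ↦ ?_⟩
  · simpa [norm_smul] using inv_mul_le_one
  · simp [inner_smul_left, pow_two, ← mul_assoc]
  · calc
      inner ℝ v u ≤ ‖v‖ * ‖u‖ := real_inner_le_norm v u
      _ ≤ ‖u‖ := mul_le_of_le_one_left (norm_nonneg u) (mem_closedBall_zero_iff.1 hv)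

end HasSupportFn

end SupportFunction

section Modulus

lemma exists_upperHalfPlane_norm_eq {L : EuclideanSpace ℝ (Fin 2) →ₗ[ℝ] ℂ}
    (hL : Function.Injective L) :
    ∃ a > (0 : ℝ), ∃ τ : ℍ, ∀ w, ‖L w‖ = a * ‖(w 0 : ℂ) - w 1 * τ‖ := by
  set u := L !₂[1, 0] with hu
  set v := L !₂[0, 1] with hv
  have hLw (w) : L w = w 0 * u + w 1 * v := by
    have hw : w = w 0 • !₂[1, 0] + w 1 • !₂[0, 1] := by ext i; fin_cases i <;> simp
    conv_lhs => rw [hw]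
    simp [hu, hv]
  have hu0 : u ≠ 0 := fun h ↦ by
    simpa using congrArg (· 0) (hL (h.trans (map_zero L).symm))
  obtain ⟨ζ, hLζ⟩ : ∃ ζ : ℂ, ∀ w, L w = u * (w 0 - w 1 * ζ) :=
    ⟨-v / u, fun w ↦ by rw [hLw]; field_simp; ring⟩
  have him : ζ.im ≠ 0 := fun h ↦ by
    have hζ : (ζ.re : ℂ) = ζ := Complex.ext rfl (by simp [h])
    have hker : L !₂[ζ.re, 1] = L 0 := by simp [hLζ, hζ]
    simpa using congrArg (· 1) (hL hker)
  refine ⟨‖u‖, norm_pos_iff.2 hu0, ?_⟩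
  rcases him.lt_or_gt with him | him
  · refine ⟨⟨conj ζ, by simpa using him⟩, fun w ↦ ?_⟩
    rw [hLζ, norm_mul, ← Complex.norm_conj (_ - _)]
    simp
  · exact ⟨⟨ζ, him⟩, fun w ↦ by rw [hLζ, norm_mul]⟩

namespace IsSymmEllipse

variable {E : Set (EuclideanSpace ℝ (Fin 2))}

lemma isClosed (hE : IsSymmEllipse E) : IsClosed E := by
  obtain ⟨A, rfl⟩ := hE
  exact A.toContinuousLinearEquiv.toHomeomorph.isClosed_image.2 Metric.isClosed_closedBall

lemma convex (hE : IsSymmEllipse E) : Convex ℝ E := by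
  obtain ⟨A, rfl⟩ := hE
  exact (convex_closedBall 0 1).linear_image A.toLinearMap

lemma exists_hasSupportFn (hE : IsSymmEllipse E) :
    ∃ a > (0 : ℝ), ∃ τ : ℍ, HasSupportFn E (a • fun w ↦ ‖(w 0 : ℂ) - w 1 * τ‖) := by
  obtain ⟨A, rfl⟩ := hE
  let T : EuclideanSpace ℝ (Fin 2) →L[ℝ] EuclideanSpace ℝ (Fin 2) := A.toContinuousLinearEquiv
  let e := Complex.orthonormalBasisOneI.repr.symm
  have hT : Function.Injective (ContinuousLinearMap.adjoint T) := by
    have hrange : T.range = ⊤ := LinearMap.range_eq_top.2 A.surjective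
    rw [← ContinuousLinearMap.coe_coe, ← LinearMap.ker_eq_bot]
    simp [← ContinuousLinearMap.orthogonal_range, hrange]
  obtain ⟨a, ha, τ, h⟩ := exists_upperHalfPlane_norm_eq
    (L := e.toLinearMap ∘ₗ (ContinuousLinearMap.adjoint T).toLinearMap) (e.injective.comp hT)
  refine ⟨a, ha, τ, ?_⟩
  have hfun : (a • fun w : EuclideanSpace ℝ (Fin 2) ↦ ‖(w 0 : ℂ) - w 1 * τ‖) =
      fun w ↦ ‖ContinuousLinearMap.adjoint T w‖ := by
    ext w
    simpa using (h w).symm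
  rw [hfun]
  exact HasSupportFn.image_closedBall T

end IsSymmEllipse

end Modulus

section LinearIndependence

lemma frequently_nhdsNE_ofReal {p : ℂ → Prop} (h : ∀ t : ℝ, p t) (x : ℝ) :
    ∃ᶠ z in 𝓝[≠] (x : ℂ), p z := by
  have hx : Tendsto ((↑) : ℝ → ℂ) (𝓝[≠] x) (𝓝[≠] x) :=
    Complex.continuous_ofReal.continuousWithinAt.tendsto_nhdsWithin fun t ht ↦ by simpa using ht
  exact hx.frequently (Eventually.of_forall h).frequently

lemma eventuallyEq_of_forall_ofReal_eq {F : Type*} [NormedAddCommGroup F] [NormedSpace ℂ F]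
    {f g : ℂ → F} {U : Set ℂ} (hf : AnalyticOnNhd ℂ f U) (hg : AnalyticOnNhd ℂ g U)
    (hU : IsPreconnected U) (h : ∀ t : ℝ, f t = g t) {x : ℝ} (hx : (x : ℂ) ∈ U) {w : ℂ}
    (hw : w ∈ U) : f =ᶠ[𝓝 w] g := by
  have hord_x : analyticOrderAt (f - g) x = ⊤ := by
    rw [analyticOrderAt_eq_top, ← ((hf.sub hg) x hx).frequently_zero_iff_eventually_zero]
    exact frequently_nhdsNE_ofReal (by simp [h]) x
  have hord_w : analyticOrderAt (f - g) w = ⊤ := by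
    contrapose! hord_x
    exact (hf.sub hg).analyticOrderAt_ne_top_of_isPreconnected hU hw hx hord_x
  filter_upwards [analyticOrderAt_eq_top.1 hord_w] with z hz
  exact sub_eq_zero.1 hz

lemma deriv_eq_zero_of_eventuallyEq_sq {𝕜 : Type*} [NontriviallyNormedField 𝕜] {p g : 𝕜 → 𝕜}
    {w : 𝕜} (hg : DifferentiableAt 𝕜 g w) (hp : p =ᶠ[𝓝 w] fun z ↦ g z ^ 2) (hpw : p w = 0) :
    deriv p w = 0 := by
  have hgw : g w = 0 := by simpa [hpw, eq_comm (a := (0 : 𝕜))] using hp.eq_of_nhds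
  rw [hp.deriv_eq]
  simp [deriv_fun_pow hg, hgw]

/-- The distance to a point `τ` of the upper half plane, as a function on the real line. It is,
up to scaling, the restriction to the line `w 1 = 1` of the support function of an ellipse. -/
noncomputable def distFromReal (τ : ℍ) (t : ℝ) : ℝ := ‖(t : ℂ) - τ‖

/-- The polynomial `(z - τ) * (z - conj τ)` extending the square of `distFromReal τ` to the complex
plane. -/
def complexDistSq (τ : ℍ) (z : ℂ) : ℂ := (z - τ) * (z - conj (τ : ℂ))

lemma complexDistSq_ofReal (τ : ℍ) (t : ℝ) : complexDistSq τ t = (distFromReal τ t : ℂ) ^ 2 := by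
  simpa [complexDistSq, distFromReal] using Complex.mul_conj' ((t : ℂ) - τ)

lemma analyticAt_complexDistSq (τ : ℍ) (z : ℂ) : AnalyticAt ℂ (complexDistSq τ) z := by
  unfold complexDistSq
  fun_prop

lemma complexDistSq_mem_slitPlane_iff {τ : ℍ} {z : ℂ} :
    complexDistSq τ z ∈ Complex.slitPlane ↔ z.re = τ.re → |z.im| < τ.im := by
  have hre : (complexDistSq τ z).re = (z.re - τ.re) ^ 2 + (τ.im ^ 2 - z.im ^ 2) := by
    simp only [complexDistSq, Complex.mul_re, Complex.sub_re, Complex.sub_im, Complex.conj_re,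
      Complex.conj_im, coe_re, coe_im]
    ring
  have him : (complexDistSq τ z).im = 2 * (z.re - τ.re) * z.im := by
    simp only [complexDistSq, Complex.mul_im, Complex.sub_re, Complex.sub_im, Complex.conj_re,
      Complex.conj_im, coe_re, coe_im]
    ring
  rw [Complex.mem_slitPlane_iff, hre, him]
  by_cases hzτ : z.re = τ.re
  · simp [hzτ, sq_lt_sq, abs_of_pos τ.im_pos]
  · have hsub : z.re - τ.re ≠ 0 := sub_ne_zero.2 hzτ
    simp only [hzτ, false_imp_iff, iff_true]
    by_cases hz : z.im = 0
    · left
      rw [hz]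
      nlinarith [sq_nonneg (z.re - τ.re), τ.im_pos]
    · exact Or.inr (by simp [hsub, hz])

lemma not_analyticOnNhd_of_ofReal_eq_distFromReal {τ : ℍ} {U : Set ℂ} (hU : IsPreconnected U)
    {x : ℝ} (hx : (x : ℂ) ∈ U) (hτ : (τ : ℂ) ∈ U) {G : ℂ → ℂ}
    (hGτ : ∀ t : ℝ, G t = distFromReal τ t) : ¬ AnalyticOnNhd ℂ G U := by
  intro hG
  have hsq : complexDistSq τ =ᶠ[𝓝 (τ : ℂ)] fun z ↦ G z ^ 2 :=
    eventuallyEq_of_forall_ofReal_eq (fun z _ ↦ analyticAt_complexDistSq τ z)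
      (hG.pow 2) hU (fun t ↦ by simp [complexDistSq_ofReal, hGτ]) hx hτ
  have hderiv : HasDerivAt (complexDistSq τ) (τ - conj (τ : ℂ)) τ := by
    simpa using! ((hasDerivAt_id (τ : ℂ)).sub_const (τ : ℂ)).mul
      ((hasDerivAt_id (τ : ℂ)).sub_const (conj (τ : ℂ)))
  have hzero := deriv_eq_zero_of_eventuallyEq_sq (hG τ hτ).differentiableAt hsq
    (by simp [complexDistSq])
  rw [hderiv.deriv] at hzero
  simpa [τ.im_ne_zero] using congrArg Complex.im hzero

lemma exists_analyticOnNhd_of_mem_span {ι : Type*} {v : ι → ℝ → ℝ} {s : Set ι} {U : Set ℂ}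
    (hv : ∀ i ∈ s, ∃ G : ℂ → ℂ, AnalyticOnNhd ℂ G U ∧ ∀ t : ℝ, G t = v i t) {f : ℝ → ℝ}
    (hf : f ∈ Submodule.span ℝ (v '' s)) :
    ∃ G : ℂ → ℂ, AnalyticOnNhd ℂ G U ∧ ∀ t : ℝ, G t = f t := by
  induction hf using Submodule.span_induction with
  | mem f hf =>
    obtain ⟨i, hi, rfl⟩ := hf
    exact hv i hi
  | zero => exact ⟨0, analyticOnNhd_const, by simp⟩
  | add f g _ _ hf hg =>
    obtain ⟨F, hF, hFf⟩ := hf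
    obtain ⟨G, hG, hGg⟩ := hg
    exact ⟨F + G, hF.add hG, by simp [hFf, hGg]⟩
  | smul c f _ hf =>
    obtain ⟨F, hF, hFf⟩ := hf
    exact ⟨fun z ↦ c * F z, analyticOnNhd_const.mul hF, by simp [hFf]⟩

lemma exists_analyticOnNhd_ofReal_eq_distFromReal {σ : ℍ} {U : Set ℂ}
    (hU : ∀ z ∈ U, z.re = σ.re → |z.im| < σ.im) :
    ∃ G : ℂ → ℂ, AnalyticOnNhd ℂ G U ∧ ∀ t : ℝ, G t = distFromReal σ t := by
  refine ⟨fun z ↦ complexDistSq σ z ^ (2⁻¹ : ℂ), fun z hz ↦ ?_, fun t ↦ ?_⟩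
  · exact (analyticAt_complexDistSq σ z).cpow analyticAt_const
      (complexDistSq_mem_slitPlane_iff.2 (hU z hz))
  · have hpos : 0 < distFromReal σ t :=
      norm_pos_iff.2 (sub_ne_zero.2 (σ.ne_ofReal t).symm)
    dsimp only
    rw [complexDistSq_ofReal, Complex.sq_cpow_two_inv (by simpa using hpos)]

lemma distFromReal_notMem_span {τ : ℍ} {s : Set ℍ} (hs : ∀ σ ∈ s, τ.im ≤ σ.im) (hτ : τ ∉ s) :
    distFromReal τ ∉ Submodule.span ℝ (distFromReal '' s) := by
  let U : Set ℂ := {τ.re} ×ℂ Set.Icc 0 τ.im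
  have hU : IsPreconnected U :=
    (((convex_singleton _).linear_preimage Complex.reLm).inter
      ((convex_Icc _ _).linear_preimage Complex.imLm)).isPreconnected
  have hsU : ∀ σ ∈ s, ∀ z ∈ U, z.re = σ.re → |z.im| < σ.im := by
    rintro σ hσ z ⟨hzre, hz0, hzτ⟩ hre
    rw [abs_of_nonneg hz0]
    refine (hzτ.trans (hs σ hσ)).lt_of_ne fun him ↦ hτ ?_
    have hστ : σ = τ :=
      UpperHalfPlane.ext_re_im (hre.symm.trans hzre) ((him ▸ hzτ).antisymm (hs σ hσ))
    exact hστ ▸ hσ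
  intro hspan
  obtain ⟨G, hG, hGτ⟩ := exists_analyticOnNhd_of_mem_span
    (fun σ hσ ↦ exists_analyticOnNhd_ofReal_eq_distFromReal (hsU σ hσ)) hspan
  exact not_analyticOnNhd_of_ofReal_eq_distFromReal hU (x := τ.re)
    (by simp [U, Complex.mem_reProdIm, τ.im_pos.le])
    (by simp [U, Complex.mem_reProdIm, τ.im_pos.le]) hGτ hG

theorem linearIndependent_distFromReal : LinearIndependent ℝ distFromReal := by
  classical
  refine linearIndependent_iff_finset_linearIndependent.2 fun s ↦ ?_
  change LinearIndepOn ℝ distFromReal (s : Set ℍ)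
  induction s using Finset.induction_on_min_value UpperHalfPlane.im with
  | empty => simp
  | insert τ s hτ hmin ih =>
    rw [Finset.coe_insert]
    exact ih.insert (distFromReal_notMem_span hmin (by simpa using hτ))

lemma eq_of_sum_smul_eq_smul_of_linearIndependent {R M ι κ : Type*} [Semiring R] [PartialOrder R]
    [IsOrderedCancelAddMonoid R] [AddCommMonoid M] [Module R M] {v : κ → M}
    (hv : LinearIndependent R v) [Fintype ι] {f : ι → κ} {c : ι → R} (hc : ∀ i, 0 < c i)
    {k : κ} {b : R} (h : ∑ i, c i • v (f i) = b • v k) (i : ι) : f i = k := by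
  have hsum : ∑ j, Finsupp.single (f j) (c j) = Finsupp.single k b :=
    hv (by simpa [map_sum] using h)
  by_contra hne
  have hpos : 0 < ∑ j, Finsupp.single (f j) (c j) (f i) := by
    refine Finset.sum_pos' (fun j _ ↦ ?_) ⟨i, Finset.mem_univ i, by simpa using hc i⟩
    exact Finsupp.single_nonneg.2 (hc j).le (f i)
  rw [← Finsupp.finsetSum_apply, hsum, Finsupp.single_eq_of_ne hne] at hpos
  exact hpos.false

end LinearIndependence

theorem minkowski_sum_of_ellipses_not_ellipse_general {ι : Type*} [Fintype ι]
    (E : ι → Set (EuclideanSpace ℝ (Fin 2))) (hE : ∀ i, IsSymmEllipse (E i))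
    (i j : ι) (hij : ∀ r : ℝ, 0 < r → E i ≠ r • E j) (c : ι → ℝ) (hc : ∀ i, 0 < c i) :
    ¬ IsSymmEllipse (∑ i, c i • E i) := by
  intro hS
  choose a ha τ hτ using fun i ↦ (hE i).exists_hasSupportFn
  obtain ⟨b, -, σ, hσ⟩ := hS.exists_hasSupportFn
  have hsupp := (HasSupportFn.sum fun i _ ↦ (hτ i).smul (hc i).le).unique hσ
  have hdist : ∑ i, (c i * a i) • distFromReal (τ i) = b • distFromReal σ := by
    ext t
    simpa [distFromReal, mul_assoc] using congrFun hsupp !₂[t, 1]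
  have hτσ : ∀ i, τ i = σ := eq_of_sum_smul_eq_smul_of_linearIndependent
    linearIndependent_distFromReal (fun i ↦ mul_pos (hc i) (ha i)) hdist
  simp only [hτσ] at hτ
  exact hij (a i / a j) (div_pos (ha i) (ha j)) <| (hτ i).eq_div_smul (ha i) (ha j) (hτ j)
    (hE i).convex (hE i).isClosed (hE j).convex (hE j).isClosed

/-- A Minkowski sum of at least two pairwise non-homothetic origin-symmetric ellipses with
positive coefficients is never an ellipse. -/
theorem minkowski_sum_of_ellipses_not_ellipse
    (n : ℕ) (hn : 2 ≤ n)
    (E : Fin n → Set (EuclideanSpace ℝ (Fin 2)))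
    (hE : ∀ i, IsSymmEllipse (E i))
    (hnh : ∀ i j, i ≠ j → ∀ r : ℝ, 0 < r → E i ≠ r • E j)
    (c : Fin n → ℝ) (hc : ∀ i, 0 < c i) :
    ¬ IsSymmEllipse (∑ i : Fin n, c i • E i) :=
  have ⟨i, j, hij⟩ := (Fin.nontrivial_iff_two_le.2 hn).exists_pair_ne
  minkowski_sum_of_ellipses_not_ellipse_general E hE i j (hnh i j hij) c hc
end
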